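/- arXiv:2003.11840 — 2 statements merged into one kernel-verified Lean document; each statement's English description precedes it below -/
import Mathlib

section
/- Let J ⊆ ℝ be an interval containing 0 and let M : J → ℝ be a continuous nonnegative function satisfying M(t) ≤ C₁ + C₂ · M(t)^κ for all t ∈ J, where C₁ > 0, C₂ > 0 and κ > 1 are constants. If M(0) ≤ C₁ and C₁ · C₂^{1/(κ-1)} < (1 − 1/κ) · κ^{-1/(κ-1)}, then M(t) < C₁ / (1 − 1/κ) for all t ∈ J. -/
/-- Strauss' bootstrap lemma: if a continuous nonnegative `M` on an interval `J ∋ 0` satisfies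
`M t ≤ C₁ + C₂ * M t ^ κ`, with `M 0 ≤ C₁` and the smallness condition
`C₁ * C₂^(1/(κ-1)) < (1 - 1/κ) * κ^(-(1/(κ-1)))`, then `M t < C₁ / (1 - 1/κ)` on `J`. -/
theorem strauss_bootstrap (J : Set ℝ) (hJ : J.OrdConnected) (h0 : (0:ℝ) ∈ J)
    (C₁ C₂ κ : ℝ) (hC₁ : 0 < C₁) (hC₂ : 0 < C₂) (hκ : 1 < κ)
    (M : ℝ → ℝ) (hcont : ContinuousOn M J) (hnonneg : ∀ t ∈ J, 0 ≤ M t)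
    (hineq : ∀ t ∈ J, M t ≤ C₁ + C₂ * M t ^ κ)
    (hM0 : M 0 ≤ C₁)
    (hsmall : C₁ * C₂ ^ (1 / (κ - 1)) < (1 - 1 / κ) * κ ^ (-(1 / (κ - 1)))) :
    ∀ t ∈ J, M t < C₁ / (1 - 1 / κ) := by
  intro t ht
  by_contra! hcon
  have hk0 : 0 < κ := by linarith
  have hk1 : 0 < κ - 1 := by linarith
  have hinv : 0 < 1 / κ := by positivity
  have hd : 0 < 1 - 1 / κ := by
    have : 1 / κ < 1 := by rw [div_lt_one hk0]; exact hκ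
    linarith
  obtain ⟨a, ha⟩ : ∃ a, a = C₁ / (1 - 1 / κ) := ⟨_, rfl⟩
  rw [← ha] at hcon
  have hapos : 0 < a := by rw [ha]; positivity
  have hC : C₁ = a * (1 - 1 / κ) := by rw [ha]; field_simp
  have hlt : M 0 ≤ a := by nlinarith [mul_pos hapos hinv]
  obtain ⟨s, hs, hsa⟩ := hJ.isPreconnected.intermediate_value h0 ht hcont ⟨hlt, hcon⟩
  have h1 := hineq s hs
  rw [hsa] at h1
  have hsplit : a ^ κ = a ^ (κ - 1) * a := by
    rw [← Real.rpow_add_one hapos.ne']; congr 1; ring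
  have h2 : a * (1 / κ) ≤ a * (a ^ (κ - 1) * C₂) := by
    rw [hsplit] at h1; nlinarith
  have h3 : 1 / κ ≤ a ^ (κ - 1) * C₂ := le_of_mul_le_mul_left h2 hapos
  have h4 : a * C₂ ^ (1 / (κ - 1)) < κ ^ (-(1 / (κ - 1))) := by
    rw [hC] at hsmall
    have : (1 - 1 / κ) * (a * C₂ ^ (1 / (κ - 1))) < (1 - 1 / κ) * κ ^ (-(1 / (κ - 1))) := by
      linarith
    exact lt_of_mul_lt_mul_left this hd.le
  have h5 := Real.rpow_lt_rpow (by positivity) h4 hk1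
  rw [Real.mul_rpow hapos.le (by positivity), ← Real.rpow_mul hC₂.le, ← Real.rpow_mul hk0.le,
    neg_mul, one_div_mul_cancel hk1.ne', Real.rpow_one, Real.rpow_neg_one, ← one_div] at h5
  linarith
end

section
/- Let J ⊆ ℝ be an interval containing 0, let C₁ > 0 and C₂ > 0, and let M : J → ℝ be a continuous nonnegative function satisfying M(t) ≤ C₁ + C₂ · (M(t)^{3/2} + M(t)²) for all t ∈ J and M(0) ≤ C₁. If C₂ · (2^{3/2} · C₁^{1/2} + 4 C₁) < 1, then M(t) < 2 C₁ for all t ∈ J. -/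
/-- Two-power bootstrap bound: if a continuous nonnegative `M` on an interval `J ∋ 0`
satisfies `M t ≤ C₁ + C₂ (M t^{3/2} + M t²)` with `M 0 ≤ C₁` and
`C₂ (2^{3/2} C₁^{1/2} + 4 C₁) < 1`, then `M t < 2 C₁` on `J`. -/
theorem two_power_bootstrap (J : Set ℝ) (hJ : J.OrdConnected) (h0 : (0:ℝ) ∈ J)
    (C₁ C₂ : ℝ) (hC₁ : 0 < C₁) (hC₂ : 0 < C₂)
    (M : ℝ → ℝ) (hcont : ContinuousOn M J) (hnonneg : ∀ t ∈ J, 0 ≤ M t)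
    (hineq : ∀ t ∈ J, M t ≤ C₁ + C₂ * (M t ^ ((3:ℝ)/2) + M t ^ 2))
    (hM0 : M 0 ≤ C₁)
    (hsmall : C₂ * (2 ^ ((3:ℝ)/2) * C₁ ^ ((1:ℝ)/2) + 4 * C₁) < 1) :
    ∀ t ∈ J, M t < 2 * C₁ := by
  intro t ht
  by_contra! hlt
  obtain ⟨s, hs, hMs⟩ := hJ.isPreconnected.intermediate_value h0 ht hcont
    (show 2 * C₁ ∈ Set.Icc (M 0) (M t) from ⟨by linarith, hlt⟩)
  have h := hineq s hs
  have e : (C₁ : ℝ) ^ ((3:ℝ)/2) = C₁ * C₁ ^ ((1:ℝ)/2) := by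
    rw [show ((3:ℝ)/2) = 1 + 1/2 by norm_num, Real.rpow_add hC₁, Real.rpow_one]
  rw [hMs, Real.mul_rpow (by norm_num) hC₁.le, e] at h
  have h2 := mul_lt_mul_of_pos_left hsmall hC₁
  nlinarith [h, h2]
end
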